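/- Let μ be a weak Gibbs measure for an almost additive sequence Φ = (φ_n)_n of continuous functions on a topologically mixing one-sided subshift of finite type (Σ,σ). Then there exists an asymptotically additive sequence Ψ = (ψ_n)_n on Σ such that μ is a Gibbs measure for Ψ. -/

import Mathlib

open MeasureTheory Filter Topology Set

namespace WG

/-- The one-sided subshift of finite type determined by a 0-1 transition matrix `M`. -/
abbrev Space {k : ℕ} (M : Matrix (Fin k) (Fin k) ℕ) : Type :=
  {ω : ℕ → Fin k // ∀ i : ℕ, M (ω i) (ω (i + 1)) = 1}

variable {k : ℕ}

/-- The shift map on the subshift. -/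
def shift (M : Matrix (Fin k) (Fin k) ℕ) (ω : Space M) : Space M :=
  ⟨fun i => ω.1 (i + 1), fun i => ω.2 (i + 1)⟩

/-- `M` is a 0-1 matrix and the subshift is topologically mixing:
some power of `M` has all entries strictly positive. -/
def Mixing (M : Matrix (Fin k) (Fin k) ℕ) : Prop :=
  (∀ i j, M i j = 0 ∨ M i j = 1) ∧ ∃ l : ℕ, 0 < l ∧ ∀ i j, 0 < (M ^ l) i j

/-- The cylinder `C_{w₀ … w_{n-1}}`. -/
def cyl (M : Matrix (Fin k) (Fin k) ℕ) (n : ℕ) (w : Fin n → Fin k) : Set (Space M) :=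
  {ω | ∀ j : Fin n, ω.1 j.1 = w j}

/-- The initial word of length `n` of a point `ω`. -/
def word (M : Matrix (Fin k) (Fin k) ℕ) (n : ℕ) (ω : Space M) : Fin n → Fin k :=
  fun j => ω.1 j.1

/-- Birkhoff sums `S_n f`. -/
noncomputable def birk (M : Matrix (Fin k) (Fin k) ℕ) (f : Space M → ℝ) (n : ℕ)
    (ω : Space M) : ℝ :=
  ∑ j ∈ Finset.range n, f ((shift M)^[j] ω)

/-- The standard metric `d(ω,κ) = ∑ᵢ |ωᵢ - κᵢ| / 2^{i+1}` on the shift space. -/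
noncomputable def dist' (M : Matrix (Fin k) (Fin k) ℕ) (ω κ : Space M) : ℝ :=
  ∑' i : ℕ, |((ω.1 i : ℕ) : ℝ) - ((κ.1 i : ℕ) : ℝ)| / 2 ^ (i + 1)

/-- `E` is an `(n,ε)`-separated set. -/
def IsSep (M : Matrix (Fin k) (Fin k) ℕ) (n : ℕ) (ε : ℝ) (E : Finset (Space M)) : Prop :=
  ∀ ω ∈ E, ∀ κ ∈ E, ω ≠ κ → ∃ i < n, ε < dist' M ((shift M)^[i] ω) ((shift M)^[i] κ)

/-- `P(Φ, n, ε)`: supremum of `∑_{ω ∈ E} exp(φ_n ω)` over `(n,ε)`-separated sets `E`. -/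
noncomputable def sepSum (M : Matrix (Fin k) (Fin k) ℕ) (Φ : ℕ → Space M → ℝ)
    (n : ℕ) (ε : ℝ) : ℝ :=
  sSup {s | ∃ E : Finset (Space M), IsSep M n ε E ∧ s = ∑ ω ∈ E, Real.exp (Φ n ω)}

/-- `P` is the topological pressure of the sequence `Φ`:
`P = lim_{ε→0⁺} limsup_n (1/n) log P(Φ,n,ε)`. -/
def IsPressure (M : Matrix (Fin k) (Fin k) ℕ) (Φ : ℕ → Space M → ℝ) (P : ℝ) : Prop :=
  Tendsto (fun ε : ℝ => limsup (fun n : ℕ => Real.log (sepSum M Φ n ε) / n) atTop)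
    (𝓝[>] (0 : ℝ)) (𝓝 P)

/-- The sequence `Φ = (φ_n)` is asymptotically additive. -/
def AsympAdd (M : Matrix (Fin k) (Fin k) ℕ) (Φ : ℕ → Space M → ℝ) : Prop :=
  (∀ n, Continuous (Φ n)) ∧
  ∀ ε > (0 : ℝ), ∃ ρ : Space M → ℝ, Continuous ρ ∧
    limsup (fun n : ℕ => (⨆ ω : Space M, |Φ n ω - birk M ρ n ω|) / n) atTop < ε

/-- `μ` is a weak Gibbs measure for the sequence `Φ` with constant `P`. -/
def WeakGibbs (M : Matrix (Fin k) (Fin k) ℕ) (Φ : ℕ → Space M → ℝ) (P : ℝ)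
    (μ : Measure (Space M)) : Prop :=
  ∃ K : ℕ → ℝ, (∀ n, 0 < K n) ∧ Tendsto (fun n : ℕ => Real.log (K n) / n) atTop (𝓝 0) ∧
    ∀ n : ℕ, ∀ w : Fin n → Fin k, ∀ ω ∈ cyl M n w,
      1 / K n ≤ (μ (cyl M n w)).toReal / Real.exp (Φ n ω - n * P) ∧
      (μ (cyl M n w)).toReal / Real.exp (Φ n ω - n * P) ≤ K n

/-- `μ` is a Gibbs measure for the sequence `Φ` with constant `P`. -/
def Gibbs (M : Matrix (Fin k) (Fin k) ℕ) (Φ : ℕ → Space M → ℝ) (P : ℝ)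
    (μ : Measure (Space M)) : Prop :=
  ∃ K : ℝ, 0 < K ∧
    ∀ n : ℕ, ∀ w : Fin n → Fin k, ∀ ω ∈ cyl M n w,
      1 / K ≤ (μ (cyl M n w)).toReal / Real.exp (Φ n ω - n * P) ∧
      (μ (cyl M n w)).toReal / Real.exp (Φ n ω - n * P) ≤ K

/-- Sum of `exp(φ_n ω)` over points of period `n`. -/
noncomputable def perSum (M : Matrix (Fin k) (Fin k) ℕ) (Φ : ℕ → Space M → ℝ) (n : ℕ) : ℝ :=
  ∑' ω : {ω : Space M // (shift M)^[n] ω = ω}, Real.exp (Φ n ω.1)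

/-- `var_n(g)`: the variation of `g` over cylinders of length `n`. -/
noncomputable def varCyl (M : Matrix (Fin k) (Fin k) ℕ) (n : ℕ) (g : Space M → ℝ) : ℝ :=
  sSup {x | ∃ ω κ : Space M, (∀ j : Fin n, ω.1 j.1 = κ.1 j.1) ∧ x = |g ω - g κ|}

open Classical in
/-- `∑_{C ∈ Z_n} exp (sup_C S_n φ)`: the cylinder partition sum of `φ`. -/
noncomputable def cylSum (M : Matrix (Fin k) (Fin k) ℕ) (φ : Space M → ℝ) (n : ℕ) : ℝ :=
  ∑ w ∈ Finset.univ.filter (fun w : Fin n → Fin k => (cyl M n w).Nonempty),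
    Real.exp (sSup (birk M φ n '' cyl M n w))

end WG

/-!
Gibbs bounds say exactly that `log μ(C_n(ω))` stays within a controlled distance of
`φ_n(ω) - nP`. So `ψ_n(ω) = log μ(C_n(ω)) + nP` turns `μ` into a Gibbs measure with constant `1`,
and the weak Gibbs property of `μ` for `Φ` says that `ψ_n` is within `log K(n) = o(n)` of `φ_n`,
uniformly. Asymptotic additivity and pressure do not see uniform `o(n)` perturbations, so `Ψ`
inherits both from `Φ`. An almost additive `Φ` is asymptotically additive because summing
`φ_{j+m} ≈ φ_j + φ_m ∘ σ^j` over `j < n` telescopes to `m φ_n ≈ S_n φ_m` with error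
`n C + O_m(1)`: thus `φ_n` is within `n C / m + O_m(1)` of `S_n (φ_m / m)`, and `m` can be taken
arbitrarily large.
-/

namespace WG

/-! ### Suprema and upper limits of real sequences -/

section RealBounds

lemma sInf_le_sInf_of_forall_add_mem {s t : Set ℝ} (hs : s.Nonempty) (ht : BddBelow t)
    (h : ∀ a ∈ s, ∀ e > 0, a + e ∈ t) : sInf t ≤ sInf s := by
  refine le_csInf hs fun a ha => le_of_forall_pos_le_add fun e he => ?_
  exact csInf_le ht (h a ha e he)

lemma sInf_eq_sInf_of_forall_add_mem {s t : Set ℝ} (hst : ∀ a ∈ s, ∀ e > 0, a + e ∈ t)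
    (hts : ∀ a ∈ t, ∀ e > 0, a + e ∈ s) : sInf s = sInf t := by
  have nonempty_of {s t : Set ℝ} (h : ∀ a ∈ s, ∀ e > 0, a + e ∈ t) (hs : s.Nonempty) :
      t.Nonempty :=
    hs.elim fun a ha => ⟨a + 1, h a ha 1 one_pos⟩
  have bddBelow_of {s t : Set ℝ} (h : ∀ a ∈ s, ∀ e > 0, a + e ∈ t) (ht : BddBelow t) :
      BddBelow s :=
    ht.elim fun b hb => ⟨b - 1, fun a ha => sub_le_iff_le_add.2 (hb (h a ha 1 one_pos))⟩
  rcases s.eq_empty_or_nonempty with rfl | hs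
  · rw [not_nonempty_iff_eq_empty.1 fun ht => not_nonempty_empty (nonempty_of hts ht)]
  by_cases hb : BddBelow s
  · exact le_antisymm (sInf_le_sInf_of_forall_add_mem (nonempty_of hst hs) hb hts)
      (sInf_le_sInf_of_forall_add_mem hs (bddBelow_of hts hb) hst)
  · rw [Real.sInf_of_not_bddBelow hb, Real.sInf_of_not_bddBelow (mt (bddBelow_of hst) hb)]

/-- No boundedness is assumed: where one real `limsup` is a junk value, so is the other, and the two
junk values agree. -/
lemma limsup_eq_limsup_of_tendsto_sub_nhds_zero {ι : Type*} {l : Filter ι} {u v : ι → ℝ}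
    (h : Tendsto (fun i => u i - v i) l (𝓝 0)) : limsup u l = limsup v l := by
  have eventually_le_add {u v : ι → ℝ} (h : Tendsto (fun i => u i - v i) l (𝓝 0)) :
      ∀ a ∈ {a | ∀ᶠ i in l, v i ≤ a}, ∀ e > 0, a + e ∈ {a | ∀ᶠ i in l, u i ≤ a} := by
    intro a (ha : ∀ᶠ i in l, v i ≤ a) e he
    filter_upwards [ha, h.eventually_lt_const he] with i hv huv
    linarith
  rw [limsup_eq, limsup_eq]
  refine sInf_eq_sInf_of_forall_add_mem (eventually_le_add ?_) (eventually_le_add h)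
  simpa using h.neg

lemma limsup_div_nat_eq_of_abs_sub_le {a b L : ℕ → ℝ}
    (hL : Tendsto (fun n : ℕ => L n / n) atTop (𝓝 0)) (h : ∀ n, |a n - b n| ≤ L n) :
    limsup (fun n : ℕ => a n / n) atTop = limsup (fun n : ℕ => b n / n) atTop := by
  refine limsup_eq_limsup_of_tendsto_sub_nhds_zero (squeeze_zero_norm (fun n => ?_) hL)
  rw [← sub_div, Real.norm_eq_abs, abs_div, Nat.abs_cast]
  gcongr
  exact h n

lemma limsup_iSup_abs_div_nat_le {X : Type*} [Nonempty X] {f : ℕ → X → ℝ} {c D : ℝ}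
    (h : ∀ n x, |f n x| ≤ n * c + D) :
    limsup (fun n : ℕ => (⨆ x, |f n x|) / n) atTop ≤ c := by
  have lim : Tendsto (fun n : ℕ => c + D / n) atTop (𝓝 c) := by
    simpa using (tendsto_const_div_atTop_nhds_zero_nat D).const_add c
  rw [← lim.limsup_eq]
  refine limsup_le_limsup ?_ ?_ lim.isBoundedUnder_le
  · filter_upwards [eventually_gt_atTop 0] with n hn
    have hn : (0 : ℝ) < n := Nat.cast_pos.2 hn
    rw [div_le_iff₀ hn, add_mul, div_mul_cancel₀ _ hn.ne', mul_comm c]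
    exact ciSup_le (h n)
  · exact isCoboundedUnder_le_of_le atTop (x := 0) fun n =>
      div_nonneg (Real.iSup_nonneg fun x => abs_nonneg (f n x)) n.cast_nonneg

lemma abs_iSup_abs_sub_iSup_abs_le {X : Type*} [TopologicalSpace X] [CompactSpace X] [Nonempty X]
    {f g : X → ℝ} (hf : Continuous f) (hg : Continuous g) {L : ℝ} (h : ∀ x, |f x - g x| ≤ L) :
    |(⨆ x, |f x|) - (⨆ x, |g x|)| ≤ L := by
  let F : C(X, ℝ) := ⟨f, hf⟩
  let G : C(X, ℝ) := ⟨g, hg⟩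
  have norm_le : ‖F - G‖ ≤ L := (ContinuousMap.norm_le_of_nonempty _).2 h
  have reverse_triangle := (abs_norm_sub_norm_le F G).trans norm_le
  rwa [F.norm_eq_iSup_norm, G.norm_eq_iSup_norm] at reverse_triangle

/-- The two-sided comparison makes an unbounded `s` come with an unbounded `t`, for which both real
suprema are `0`. -/
lemma sSup_le_mul_sSup {s t : Set ℝ} {c : ℝ} (hc : 0 ≤ c) (ht : ∀ y ∈ t, 0 ≤ y)
    (hst : ∀ x ∈ s, ∃ y ∈ t, x ≤ c * y) (hts : ∀ y ∈ t, ∃ x ∈ s, y ≤ c * x) :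
    sSup s ≤ c * sSup t := by
  by_cases hb : BddAbove t
  · refine Real.sSup_le (fun x hx => ?_) (mul_nonneg hc (Real.sSup_nonneg ht))
    obtain ⟨y, hy, hxy⟩ := hst x hx
    exact hxy.trans (mul_le_mul_of_nonneg_left (le_csSup hb hy) hc)
  · have hs : ¬BddAbove s := by
      rintro ⟨b, hsb⟩
      refine hb ⟨c * b, fun y hy => ?_⟩
      obtain ⟨x, hx, hyx⟩ := hts y hy
      exact hyx.trans (mul_le_mul_of_nonneg_left (hsb hx) hc)
    simp [Real.sSup_of_not_bddAbove hs, Real.sSup_of_not_bddAbove hb]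

lemma sum_exp_le_exp_mul_sum_exp {X : Type*} {E : Finset X} {f g : X → ℝ} {L : ℝ}
    (h : ∀ x ∈ E, f x ≤ L + g x) :
    ∑ x ∈ E, Real.exp (f x) ≤ Real.exp L * ∑ x ∈ E, Real.exp (g x) := by
  rw [Finset.mul_sum]
  refine Finset.sum_le_sum fun x hx => ?_
  rw [← Real.exp_add]
  exact Real.exp_le_exp.2 (h x hx)

lemma abs_log_sub_log_le {a b L : ℝ} (ha : 0 ≤ a) (hb : 0 ≤ b) (hL : 0 ≤ L)
    (hab : a ≤ Real.exp L * b) (hba : b ≤ Real.exp L * a) : |Real.log a - Real.log b| ≤ L := by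
  have log_le_add {a b : ℝ} (ha : 0 < a) (hb : 0 < b) (hab : a ≤ Real.exp L * b) :
      Real.log a ≤ L + Real.log b := by
    simpa [Real.log_mul, hb.ne'] using Real.log_le_log ha hab
  rcases ha.eq_or_lt with rfl | ha
  · simpa [le_antisymm (by simpa using hba) hb] using hL
  have hb : 0 < b := pos_of_mul_pos_right (ha.trans_le hab) (Real.exp_pos L).le
  rw [abs_sub_le_iff]
  exact ⟨sub_le_iff_le_add.2 (log_le_add ha hb hab), sub_le_iff_le_add.2 (log_le_add hb ha hba)⟩

lemma abs_log_sub_le_log {a x K : ℝ} (hK : 0 < K) (hlower : 1 / K ≤ a / Real.exp x)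
    (hupper : a / Real.exp x ≤ K) : |Real.log a - x| ≤ Real.log K := by
  have ratio_pos : 0 < a / Real.exp x := (one_div_pos.2 hK).trans_le hlower
  have ha : 0 < a := (div_pos_iff_of_pos_right (Real.exp_pos x)).1 ratio_pos
  have log_ratio : Real.log (a / Real.exp x) = Real.log a - x := by
    rw [Real.log_div ha.ne' (Real.exp_pos x).ne', Real.log_exp]
  rw [← log_ratio, abs_le, ← Real.log_inv, ← one_div]
  exact ⟨Real.log_le_log (one_div_pos.2 hK) hlower, Real.log_le_log ratio_pos hupper⟩

end RealBounds

/-! ### Almost additive sequences -/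

section AlmostAdditive

variable {X : Type*} {T : X → X} {Φ : ℕ → X → ℝ}

/-- Almost additivity of a sequence of functions along the orbits of a map `T`. -/
def AlmostAdditive (T : X → X) (Φ : ℕ → X → ℝ) : Prop :=
  ∃ C > (0 : ℝ), ∀ n m : ℕ, ∀ x : X,
    -C + Φ n x + Φ m (T^[n] x) ≤ Φ (n + m) x ∧ Φ (n + m) x ≤ C + Φ n x + Φ m (T^[n] x)

lemma AlmostAdditive.exists_abs_sub_le (h : AlmostAdditive T Φ) :
    ∃ C : ℝ, ∀ n m x, |Φ (n + m) x - Φ n x - Φ m (T^[n] x)| ≤ C := by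
  obtain ⟨C, -, hC⟩ := h
  refine ⟨C, fun n m x => abs_le.2 ⟨?_, ?_⟩⟩ <;> linarith [hC n m x]

lemma sum_range_add_sub_sum_range_eq {G : Type*} [AddCommGroup G] (a : ℕ → G) (n m : ℕ) :
    ∑ j ∈ Finset.range n, a (j + m) - ∑ j ∈ Finset.range n, a j =
      ∑ i ∈ Finset.range m, a (n + i) - ∑ i ∈ Finset.range m, a i := by
  simp only [add_comm _ m]
  rw [sub_eq_sub_iff_add_eq_add, add_comm, ← Finset.sum_range_add, add_comm m, Finset.sum_range_add,
    add_comm]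

lemma abs_sum_range_le {a : ℕ → ℝ} {C : ℝ} (h : ∀ i, |a i| ≤ C) (n : ℕ) :
    |∑ i ∈ Finset.range n, a i| ≤ n * C := by
  simpa using (Finset.abs_sum_le_sum_abs a (Finset.range n)).trans
    (Finset.sum_le_card_nsmul _ _ C fun i _ => h i)

lemma abs_mul_sub_birkhoffSum_le {C : ℝ}
    (h : ∀ n m x, |Φ (n + m) x - Φ n x - Φ m (T^[n] x)| ≤ C)
    {B : ℕ → ℝ} (hB : ∀ n x, |Φ n x| ≤ B n) (n m : ℕ) (x : X) :
    |m * Φ n x - birkhoffSum T (Φ m) n x| ≤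
      n * C + m * C + 2 * ∑ i ∈ Finset.range m, B i := by
  have decomposition : m * Φ n x - birkhoffSum T (Φ m) n x =
      ∑ j ∈ Finset.range n, (Φ (j + m) x - Φ j x - Φ m (T^[j] x))
      - ∑ i ∈ Finset.range m, (Φ (n + i) x - Φ n x - Φ i (T^[n] x))
      - ∑ i ∈ Finset.range m, Φ i (T^[n] x) + ∑ i ∈ Finset.range m, Φ i x := by
    have telescope := sum_range_add_sub_sum_range_eq (fun i => Φ i x) n m
    simp only [Finset.sum_sub_distrib, birkhoffSum, Finset.sum_const, Finset.card_range,
      nsmul_eq_mul]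
    linarith
  have defect_left := abs_le.1 (abs_sum_range_le (fun j => h j m x) n)
  have defect_right := abs_le.1 (abs_sum_range_le (fun i => h n i x) m)
  have boundary (y : X) := abs_le.1 ((Finset.abs_sum_le_sum_abs (fun i => Φ i y) _).trans
    (Finset.sum_le_sum fun i (_ : i ∈ Finset.range m) => hB i y))
  have boundary_left := boundary x
  have boundary_right := boundary (T^[n] x)
  rw [decomposition, abs_le]
  constructor <;> linarith

lemma exists_abs_sub_birkhoffSum_div_le {C : ℝ}
    (h : ∀ n m x, |Φ (n + m) x - Φ n x - Φ m (T^[n] x)| ≤ C)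
    (hbdd : ∀ n, ∃ b, ∀ x, |Φ n x| ≤ b) {m : ℕ} (hm : 0 < m) :
    ∃ D : ℝ, ∀ n x, |Φ n x - birkhoffSum T (fun y => Φ m y / m) n x| ≤ n * (C / m) + D := by
  choose B hB using hbdd
  refine ⟨(m * C + 2 * ∑ i ∈ Finset.range m, B i) / m, fun n x => ?_⟩
  have hm : (0 : ℝ) < m := Nat.cast_pos.2 hm
  have rescale : Φ n x - birkhoffSum T (fun y => Φ m y / m) n x =
      (m * Φ n x - birkhoffSum T (Φ m) n x) / m := by
    simp only [birkhoffSum, ← Finset.sum_div]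
    field_simp
  calc |Φ n x - birkhoffSum T (fun y => Φ m y / m) n x|
      = |m * Φ n x - birkhoffSum T (Φ m) n x| / m := by
        rw [rescale, abs_div, abs_of_pos hm]
    _ ≤ (n * C + m * C + 2 * ∑ i ∈ Finset.range m, B i) / m := by
        gcongr
        exact abs_mul_sub_birkhoffSum_le h hB n m x
    _ = n * (C / m) + (m * C + 2 * ∑ i ∈ Finset.range m, B i) / m := by ring

end AlmostAdditive

/-! ### Asymptotic additivity and pressure under `o(n)` perturbations -/

/-- Physical equivalence of two sequences of functions: `‖ψ_n - φ_n‖_∞ = o(n)`. The supremum norm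
enters through an upper bound `L n`, so that it need not be finite a priori. -/
def PhysicallyEquivalent {X : Type*} (Φ Ψ : ℕ → X → ℝ) : Prop :=
  ∃ L : ℕ → ℝ, Tendsto (fun n : ℕ => L n / n) atTop (𝓝 0) ∧ ∀ n x, |Ψ n x - Φ n x| ≤ L n

section Subshift

variable {k : ℕ} {M : Matrix (Fin k) (Fin k) ℕ} {Φ Ψ : ℕ → Space M → ℝ} {P : ℝ}

instance : CompactSpace (Space M) := by
  have isClosed_admissible : IsClosed {ω : ℕ → Fin k | ∀ i, M (ω i) (ω (i + 1)) = 1} := by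
    rw [ofPred_forall]
    refine isClosed_iInter fun i => isClosed_eq ?_ continuous_const
    have continuous_pair : Continuous fun ω : ℕ → Fin k => (ω i, ω (i + 1)) := by fun_prop
    exact (continuous_of_discreteTopology (f := fun p : Fin k × Fin k => M p.1 p.2)).comp
      continuous_pair
  exact isCompact_iff_compactSpace.1 isClosed_admissible.isCompact

lemma continuous_shift : Continuous (shift M) :=
  continuous_induced_rng.2 <|
    continuous_pi fun i => (continuous_apply (i + 1)).comp continuous_subtype_val

lemma continuous_birk {ρ : Space M → ℝ} (hρ : Continuous ρ) (n : ℕ) : Continuous (birk M ρ n) :=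
  continuous_finsetSum _ fun j _ => hρ.comp (continuous_shift.iterate j)

lemma AlmostAdditive.asympAdd [Nonempty (Space M)] (h : AlmostAdditive (shift M) Φ)
    (hcont : ∀ n, Continuous (Φ n)) : AsympAdd M Φ := by
  refine ⟨hcont, fun ε hε => ?_⟩
  obtain ⟨C, hC⟩ := h.exists_abs_sub_le
  have hbdd (n : ℕ) : ∃ b, ∀ ω, |Φ n ω| ≤ b := by
    obtain ⟨b, hb⟩ := isCompact_univ.exists_bound_of_continuousOn (hcont n).continuousOn
    exact ⟨b, fun ω => hb ω (mem_univ ω)⟩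
  obtain ⟨m, hCm, hm⟩ := (((tendsto_const_div_atTop_nhds_zero_nat C).eventually_lt_const hε).and
    (eventually_gt_atTop 0)).exists
  obtain ⟨D, hD⟩ := exists_abs_sub_birkhoffSum_div_le hC hbdd hm
  exact ⟨fun ω => Φ m ω / m, (hcont m).div_const _, (limsup_iSup_abs_div_nat_le hD).trans_lt hCm⟩

lemma PhysicallyEquivalent.asympAdd [Nonempty (Space M)] (h : PhysicallyEquivalent Φ Ψ)
    (hΦ : AsympAdd M Φ) (hΨ : ∀ n, Continuous (Ψ n)) : AsympAdd M Ψ := by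
  obtain ⟨L, hL, hΦΨ⟩ := h
  refine ⟨hΨ, fun ε hε => ?_⟩
  obtain ⟨ρ, hρ, hlt⟩ := hΦ.2 ε hε
  refine ⟨ρ, hρ, (limsup_div_nat_eq_of_abs_sub_le hL fun n => ?_).trans_lt hlt⟩
  refine abs_iSup_abs_sub_iSup_abs_le ((hΨ n).sub (continuous_birk hρ n))
    ((hΦ.1 n).sub (continuous_birk hρ n)) fun ω => ?_
  simpa only [Pi.sub_apply, sub_sub_sub_cancel_right] using hΦΨ n ω

lemma sepSum_nonneg (n : ℕ) (ε : ℝ) : 0 ≤ sepSum M Φ n ε := by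
  refine Real.sSup_nonneg ?_
  rintro _ ⟨E, -, rfl⟩
  positivity

lemma sepSum_le_exp_mul_sepSum {n : ℕ} {L : ℝ} (h : ∀ ω, |Ψ n ω - Φ n ω| ≤ L) (ε : ℝ) :
    sepSum M Ψ n ε ≤ Real.exp L * sepSum M Φ n ε := by
  have hΨΦ (ω : Space M) : Ψ n ω ≤ L + Φ n ω := sub_le_iff_le_add.1 (abs_sub_le_iff.1 (h ω)).1
  have hΦΨ (ω : Space M) : Φ n ω ≤ L + Ψ n ω := sub_le_iff_le_add.1 (abs_sub_le_iff.1 (h ω)).2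
  refine sSup_le_mul_sSup (Real.exp_pos L).le ?_ ?_ ?_ <;> rintro _ ⟨E, hE, rfl⟩
  · positivity
  · exact ⟨_, ⟨E, hE, rfl⟩, sum_exp_le_exp_mul_sum_exp fun ω _ => hΨΦ ω⟩
  · exact ⟨_, ⟨E, hE, rfl⟩, sum_exp_le_exp_mul_sum_exp fun ω _ => hΦΨ ω⟩

lemma abs_log_sepSum_sub_log_sepSum_le [Nonempty (Space M)] {n : ℕ} {L : ℝ}
    (h : ∀ ω, |Ψ n ω - Φ n ω| ≤ L) (ε : ℝ) :
    |Real.log (sepSum M Ψ n ε) - Real.log (sepSum M Φ n ε)| ≤ L := by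
  have hL : 0 ≤ L := (abs_nonneg _).trans (h (Classical.arbitrary _))
  exact abs_log_sub_log_le (sepSum_nonneg n ε) (sepSum_nonneg n ε) hL
    (sepSum_le_exp_mul_sepSum h ε)
    (sepSum_le_exp_mul_sepSum (fun ω => abs_sub_comm (Ψ n ω) _ ▸ h ω) ε)

lemma PhysicallyEquivalent.isPressure [Nonempty (Space M)] (h : PhysicallyEquivalent Φ Ψ)
    (hP : IsPressure M Φ P) : IsPressure M Ψ P := by
  obtain ⟨L, hL, hΦΨ⟩ := h
  refine Tendsto.congr (fun ε => Eq.symm ?_) hP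
  exact limsup_div_nat_eq_of_abs_sub_le hL fun n => abs_log_sepSum_sub_log_sepSum_le (hΦΨ n) ε

/-! ### The potential read off from the measures of cylinders -/

variable {μ : Measure (Space M)}

/-- The sequence `ψ_n(ω) = log μ(C_n(ω)) + n P`, where `C_n(ω)` is the cylinder of length `n`
containing `ω`; it is the exact solution of the Gibbs property for `μ` with constant `P`. -/
noncomputable def cylPotential (M : Matrix (Fin k) (Fin k) ℕ) (μ : Measure (Space M)) (P : ℝ)
    (n : ℕ) (ω : Space M) : ℝ :=
  Real.log (μ (cyl M n (word M n ω))).toReal + n * P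

lemma continuous_word (n : ℕ) : Continuous (word M n) :=
  continuous_pi fun j => (continuous_apply j.1).comp continuous_subtype_val

lemma continuous_cylPotential (n : ℕ) : Continuous (cylPotential M μ P n) :=
  (continuous_of_discreteTopology
    (f := fun w : Fin n → Fin k => Real.log (μ (cyl M n w)).toReal + n * P)).comp
    (continuous_word n)

lemma mem_cyl_word (n : ℕ) (ω : Space M) : ω ∈ cyl M n (word M n ω) :=
  fun _ => rfl

lemma word_eq_of_mem_cyl {n : ℕ} {w : Fin n → Fin k} {ω : Space M} (h : ω ∈ cyl M n w) :
    word M n ω = w :=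
  funext h

lemma gibbs_cylPotential
    (hpos : ∀ n (w : Fin n → Fin k), (cyl M n w).Nonempty → 0 < (μ (cyl M n w)).toReal) :
    Gibbs M (cylPotential M μ P) P μ := by
  refine ⟨1, one_pos, fun n w ω hω => ?_⟩
  have hw := hpos n w ⟨ω, hω⟩
  have ratio_eq_one :
      (μ (cyl M n w)).toReal / Real.exp (cylPotential M μ P n ω - n * P) = 1 := by
    rw [cylPotential, word_eq_of_mem_cyl hω, add_sub_cancel_right, Real.exp_log hw,
      div_self hw.ne']
  simp [ratio_eq_one]

lemma WeakGibbs.toReal_measure_cyl_pos (h : WeakGibbs M Φ P μ) (n : ℕ) (w : Fin n → Fin k)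
    (hw : (cyl M n w).Nonempty) : 0 < (μ (cyl M n w)).toReal := by
  obtain ⟨K, hK, -, hbound⟩ := h
  obtain ⟨ω, hω⟩ := hw
  exact (div_pos_iff_of_pos_right (Real.exp_pos _)).1
    ((one_div_pos.2 (hK n)).trans_le (hbound n w ω hω).1)

lemma WeakGibbs.physicallyEquivalent_cylPotential (h : WeakGibbs M Φ P μ) :
    PhysicallyEquivalent Φ (cylPotential M μ P) := by
  obtain ⟨K, hK, hKlim, hbound⟩ := h
  refine ⟨fun n => Real.log (K n), hKlim, fun n ω => ?_⟩
  obtain ⟨hlower, hupper⟩ := hbound n _ ω (mem_cyl_word n ω)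
  rw [cylPotential, ← sub_sub_eq_add_sub]
  exact abs_log_sub_le_log (hK n) hlower hupper

end Subshift

end WG

open WG in
theorem weakGibbs_almostAdd_is_gibbs_for_asympAdd_general
    {k : ℕ} {M : Matrix (Fin k) (Fin k) ℕ} [Nonempty (Space M)]
    {Φ : ℕ → Space M → ℝ} (hΦ : AsympAdd M Φ) {P : ℝ} (hP : IsPressure M Φ P)
    {μ : Measure (Space M)} (hμ : WeakGibbs M Φ P μ) :
    ∃ Ψ : ℕ → Space M → ℝ, AsympAdd M Ψ ∧ IsPressure M Ψ P ∧ Gibbs M Ψ P μ :=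
  have hΨ := hμ.physicallyEquivalent_cylPotential
  ⟨cylPotential M μ P, hΨ.asympAdd hΦ continuous_cylPotential, hΨ.isPressure hP,
    gibbs_cylPotential hμ.toReal_measure_cyl_pos⟩

open WG in
/-- a weak Gibbs measure for an almost additive sequence of continuous
functions on a topologically mixing subshift of finite type is a Gibbs measure for some
asymptotically additive sequence `Ψ`. -/
theorem weakGibbs_almostAdd_is_gibbs_for_asympAdd
    {k : ℕ} (M : Matrix (Fin k) (Fin k) ℕ) (hmix : Mixing M)
    (Φ : ℕ → Space M → ℝ) (hcont : ∀ n, Continuous (Φ n))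
    (halm : ∃ C > (0 : ℝ), ∀ n m : ℕ, ∀ ω : Space M,
      -C + Φ n ω + Φ m ((shift M)^[n] ω) ≤ Φ (n + m) ω ∧
        Φ (n + m) ω ≤ C + Φ n ω + Φ m ((shift M)^[n] ω))
    (P : ℝ) (hP : IsPressure M Φ P)
    (μ : Measure (Space M)) (hμ : IsProbabilityMeasure μ)
    (hwg : WeakGibbs M Φ P μ) :
    ∃ Ψ : ℕ → Space M → ℝ, AsympAdd M Ψ ∧ ∃ Q : ℝ, IsPressure M Ψ Q ∧ Gibbs M Ψ Q μ := by
  have := nonempty_of_isProbabilityMeasure μ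
  obtain ⟨Ψ, hΨ, hPΨ, hG⟩ := weakGibbs_almostAdd_is_gibbs_for_asympAdd_general
    (AlmostAdditive.asympAdd halm hcont) hP hwg
  exact ⟨Ψ, hΨ, P, hPΨ, hG⟩
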